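/- Suppose r ≥ 3 is odd, and let φ : Cl ≃ Matrix (Fin 2^r) ℂ be any ℂ-algebra isomorphism with Φ the induced isomorphism of Cl ⊗ Cl onto Matrix ((Fin 2^r) × (Fin 2^r)) ℂ. Then for each ε ∈ {+1,−1}: Tr Φ(p_{ε,−ε}·P_{2m}) = (2r)!/((2m)!(2r−2m)!) for 0 ≤ m ≤ (r−1)/2; Tr Φ(p_{εε}·P_{2m−1}) = (2r)!/((2m−1)!(2r−2m+1)!) for 1 ≤ m ≤ (r−1)/2; and Tr Φ(p_{εε}·P_r) = (2r)!/(2·(r!)^2). -/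

import Mathlib

open scoped TensorProduct

noncomputable section

/-- The quadratic form `x₁² + ⋯ + x_{2r}²` on `ℂ^{2r}`. -/
def Qf (r : ℕ) : QuadraticForm ℂ (Fin (2*r) → ℂ) :=
  QuadraticMap.weightedSumSquares ℂ (fun _ : Fin (2*r) => (1:ℂ))

/-- The Clifford algebra of `Qf r`. -/
abbrev Cl (r : ℕ) := CliffordAlgebra (Qf r)

/-- The generators `Γ_i`. -/
def Γgen (r : ℕ) (i : Fin (2*r)) : Cl r :=
  CliffordAlgebra.ι (Qf r) (Pi.single i 1)

/-- The antisymmetrised products `Γ_{[i₁…i_k]}`. -/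
def Γbr (r k : ℕ) (i : Fin k → Fin (2*r)) : Cl r :=
  ((k.factorial : ℂ))⁻¹ •
    ∑ σ : Equiv.Perm (Fin k),
      ((Equiv.Perm.sign σ : ℤ) : ℂ) • (List.ofFn fun j => Γgen r (i (σ j))).prod

/-- The invariants `I_k ∈ Cl ⊗ Cl`. -/
def Ik (r k : ℕ) : Cl r ⊗[ℂ] Cl r :=
  ∑ i : Fin k → Fin (2*r), (Γbr r k i) ⊗ₜ[ℂ] (Γbr r k i)

/-- The split Casimir element `Ĉ = −I₂/(16(2r−2))`. -/
def sC (r : ℕ) : Cl r ⊗[ℂ] Cl r := (-(16*(2*(r:ℂ)-2))⁻¹) • Ik r 2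

/-- The top element `Γ_{2r+1} = (−i)^r Γ₁⋯Γ_{2r}`. -/
def Γtop (r : ℕ) : Cl r :=
  ((-Complex.I)^r) • (List.ofFn fun i : Fin (2*r) => Γgen r i).prod

/-- The chirality projector `p_ε = (1 + ε Γ_{2r+1})/2`. -/
def pCh (r : ℕ) (ε : ℂ) : Cl r := (2:ℂ)⁻¹ • (1 + ε • Γtop r)

/-- The chirality projectors `p_{εε'} = p_ε ⊗ p_{ε'}`. -/
def ppCh (r : ℕ) (ε ε' : ℂ) : Cl r ⊗[ℂ] Cl r := (pCh r ε) ⊗ₜ[ℂ] (pCh r ε')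

/-- The eigenvalues `c_k = (2k(2r−k) − r(2r−1))/(16(r−1))`. -/
def cEv (r k : ℕ) : ℂ :=
  (2*(k:ℂ)*(2*(r:ℂ)-(k:ℂ)) - (r:ℂ)*(2*(r:ℂ)-1)) / (16*((r:ℂ)-1))

/-- The spectral projectors `P_k = Π_{j≠k} (Ĉ − c_j)/(c_k − c_j)`. -/
def Pk (r k : ℕ) : Cl r ⊗[ℂ] Cl r :=
  (((List.range (r+1)).filter (fun j => j ≠ k)).map
    (fun j => (cEv r k - cEv r j)⁻¹ • (sC r - cEv r j • 1))).prod

/-- `P_r^S = (p_{++} + p_{−−})·P_r`. -/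
def PrS (r : ℕ) : Cl r ⊗[ℂ] Cl r := (ppCh r 1 1 + ppCh r (-1) (-1)) * Pk r r

/-- The ascending factorial `a_k(u) = (u/2)(u/2+1)⋯(u/2+k−1)`. -/
def asc (u : ℂ) (k : ℕ) : ℂ := ∏ j ∈ Finset.range k, (u/2 + (j:ℂ))

lemma Γgen_mul_self (r : ℕ) (i : Fin (2*r)) : Γgen r i * Γgen r i = 1 := by
  rw [Γgen, CliffordAlgebra.ι_sq_scalar]
  have : Qf r (Pi.single i 1) = 1 := by
    simp [Qf, QuadraticMap.weightedSumSquares_apply, Pi.single_apply]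
  rw [this, map_one]

lemma Γgen_anticomm (r : ℕ) {i j : Fin (2*r)} (h : i ≠ j) :
    Γgen r i * Γgen r j = -(Γgen r j * Γgen r i) := by
  rw [Γgen, Γgen, CliffordAlgebra.ι_mul_ι_comm_of_isOrtho]
  rw [QuadraticMap.isOrtho_def]
  simp [Qf, QuadraticMap.weightedSumSquares_apply, Pi.single_apply, mul_add,
    Finset.sum_add_distrib, h, h.symm]

/-- The commuting involutions `Γ_i ⊗ Γ_i`. -/
def uGen (r : ℕ) (i : Fin (2*r)) : Cl r ⊗[ℂ] Cl r := Γgen r i ⊗ₜ[ℂ] Γgen r i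

lemma uGen_mul_self (r : ℕ) (i : Fin (2*r)) : uGen r i * uGen r i = 1 := by
  simp [uGen, Γgen_mul_self, Algebra.TensorProduct.one_def]

lemma uGen_comm (r : ℕ) (i j : Fin (2*r)) : uGen r i * uGen r j = uGen r j * uGen r i := by
  rcases eq_or_ne i j with rfl | h
  · rfl
  · simp [uGen, Γgen_anticomm r h, TensorProduct.neg_tmul, TensorProduct.tmul_neg]

lemma Γbr_two (r : ℕ) (i : Fin 2 → Fin (2*r)) :
    Γbr r 2 i = if i 0 = i 1 then 0 else Γgen r (i 0) * Γgen r (i 1) := by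
  have : (Finset.univ : Finset (Equiv.Perm (Fin 2))) = {1, Equiv.swap 0 1} := by decide
  rw [Γbr, this, Finset.sum_pair (by decide)]
  split_ifs with h
  · simp [h]
  · simp only [List.ofFn_succ, List.ofFn_zero, List.prod_cons, List.prod_nil]
    simp only [Equiv.Perm.sign_one, Equiv.Perm.sign_swap (show (0 : Fin 2) ≠ 1 by decide)]
    simp [Γgen_anticomm r (Ne.symm h), ← two_smul ℂ, smul_smul]

lemma Ik_two (r : ℕ) :
    Ik r 2 = (∑ i, uGen r i) * (∑ i, uGen r i) - (2 * (r : ℂ)) • 1 := by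
  have key : ∀ i : Fin 2 → Fin (2*r), Γbr r 2 i ⊗ₜ[ℂ] Γbr r 2 i =
      uGen r (i 0) * uGen r (i 1) - if i 0 = i 1 then 1 else 0 := by
    intro i
    rw [Γbr_two]
    split_ifs with h
    · simp [h, uGen_mul_self]
    · simp [uGen]
  rw [Ik, Finset.sum_congr rfl fun i _ => key i,
    ← (finTwoArrowEquiv (Fin (2*r))).symm.sum_comp]
  simp only [finTwoArrowEquiv_symm_apply, Matrix.cons_val_zero, Matrix.cons_val_one,
    Fintype.sum_prod_type, Finset.sum_mul_sum, Finset.sum_sub_distrib, Finset.sum_ite_eq,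
    Finset.mem_univ, if_true, Finset.sum_const, Finset.card_univ, Fintype.card_fin]
  rw [← Nat.cast_smul_eq_nsmul ℂ]
  push_cast
  rfl

lemma Γgen_mul_list_prod (r : ℕ) (i : Fin (2*r)) (l : List (Fin (2*r))) :
    Γgen r i * (l.map (Γgen r)).prod =
      (-1 : ℂ)^(l.length + l.count i) • ((l.map (Γgen r)).prod * Γgen r i) := by
  induction l with
  | nil => simp
  | cons a l ih =>
    rcases eq_or_ne a i with rfl | h
    · simp only [List.map_cons, List.prod_cons, List.length_cons, List.count_cons_self]
      rw [mul_assoc (Γgen r a), ← mul_smul_comm, show l.length + 1 + (l.count a + 1) =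
        l.length + l.count a + 2 by ring, pow_add, neg_one_sq, mul_one, ← ih]
    · simp only [List.map_cons, List.prod_cons, List.length_cons, List.count_cons_of_ne h]
      rw [← mul_assoc, Γgen_anticomm r h.symm, neg_mul, mul_assoc, ih, mul_smul_comm, mul_assoc,
        ← neg_smul]
      congr 1
      ring

lemma Γtop_eq (r : ℕ) :
    Γtop r = ((-Complex.I)^r) • ((List.finRange (2*r)).map (Γgen r)).prod := by
  rw [Γtop, List.ofFn_eq_map]

lemma Γgen_mul_Γtop (r : ℕ) (i : Fin (2*r)) : Γgen r i * Γtop r = -(Γtop r * Γgen r i) := by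
  rw [Γtop_eq, mul_smul_comm, Γgen_mul_list_prod]
  have : List.count i (List.finRange (2*r)) = 1 :=
    List.count_eq_one_of_mem (List.nodup_finRange _) (List.mem_finRange i)
  simp [this, pow_succ, pow_mul]

lemma isUnit_Γgen (r : ℕ) (i : Fin (2*r)) : IsUnit (Γgen r i) :=
  ⟨⟨_, _, Γgen_mul_self r i, Γgen_mul_self r i⟩, rfl⟩

lemma isUnit_Γtop (r : ℕ) : IsUnit (Γtop r) := by
  rw [Γtop_eq, Algebra.smul_def]
  refine IsUnit.mul (IsUnit.map _ (IsUnit.pow _ ?_)) (List.prod_isUnit ?_)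
  · simp
  · simp only [List.mem_map]
    rintro _ ⟨i, -, rfl⟩
    exact isUnit_Γgen r i

lemma Γtop_tmul_Γtop (r : ℕ) :
    Γtop r ⊗ₜ[ℂ] Γtop r = (-1 : ℂ)^r • ((List.finRange (2*r)).map (uGen r)).prod := by
  have key : ∀ l : List (Fin (2*r)), (l.map (Γgen r)).prod ⊗ₜ[ℂ] (l.map (Γgen r)).prod =
      (l.map (uGen r)).prod := by
    intro l
    induction l with
    | nil => simp [Algebra.TensorProduct.one_def]
    | cons a l ih =>
      simp only [List.map_cons, List.prod_cons, ← ih, uGen, Algebra.TensorProduct.tmul_mul_tmul]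
  rw [Γtop_eq, TensorProduct.smul_tmul_smul, key, ← mul_pow]
  simp

open scoped IsMulCommutative in
/-- Pairwise commuting elements of an algebra are the values of a homomorphism on polynomials. -/
lemma exists_aeval_of_comm {ι T : Type*} [Ring T] [Algebra ℂ T] (u : ι → T)
    (hu : ∀ i j, u i * u j = u j * u i) :
    ∃ F : MvPolynomial ι ℂ →ₐ[ℂ] T, ∀ i, F (MvPolynomial.X i) = u i := by
  have : IsMulCommutative (Algebra.adjoin ℂ (Set.range u)) :=
    Algebra.isMulCommutative_adjoin ℂ (by
      rintro _ ⟨i, rfl⟩ _ ⟨j, rfl⟩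
      exact hu i j)
  let v : ι → Algebra.adjoin ℂ (Set.range u) := fun i =>
    ⟨u i, Algebra.subset_adjoin ⟨i, rfl⟩⟩
  refine ⟨(Algebra.adjoin ℂ (Set.range u)).val.comp (MvPolynomial.aeval v), fun i => ?_⟩
  simp [v]

/-- The sign attached to `i` by the set `A`. -/
def sgnOf {n : ℕ} (A : Finset (Fin n)) (i : Fin n) : ℂ := if i ∈ A then -1 else 1

/-- The polynomial `∏ (1 ± X_i)/2` over `S`, with sign `-` exactly on `A`. -/
def idemPoly {n : ℕ} (A S : Finset (Fin n)) : MvPolynomial (Fin n) ℂ :=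
  ∏ i ∈ S, ((2:ℂ)⁻¹ • (1 + sgnOf A i • MvPolynomial.X i))

lemma sum_idemPoly (n : ℕ) : ∑ A : Finset (Fin n), idemPoly A Finset.univ = 1 := by
  have h : (1 : MvPolynomial (Fin n) ℂ) = ∏ i : Fin n,
      ((2:ℂ)⁻¹ • (1 + (-1:ℂ) • MvPolynomial.X i) +
        (2:ℂ)⁻¹ • (1 + (1:ℂ) • MvPolynomial.X i)) := by
    symm
    refine Finset.prod_eq_one fun i _ => ?_
    rw [← smul_add]
    have : (1 + (-1:ℂ) • MvPolynomial.X i + (1 + (1:ℂ) • MvPolynomial.X i) :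
      MvPolynomial (Fin n) ℂ) = (2:ℂ) • 1 := by
      rw [two_smul]; simp; ring
    rw [this, smul_smul]; simp
  rw [h, Finset.prod_add, Finset.powerset_univ]
  refine Finset.sum_congr rfl fun A _ => ?_
  rw [idemPoly, ← Finset.prod_sdiff (Finset.subset_univ A), mul_comm]
  congr 1 <;> refine Finset.prod_congr rfl fun i hi => ?_
  · simp [sgnOf, hi]
  · simp [sgnOf, (Finset.mem_sdiff.mp hi).2]

lemma sgnOf_mul_self {n : ℕ} (A : Finset (Fin n)) (i : Fin n) : sgnOf A i * sgnOf A i = 1 := by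
  unfold sgnOf; split_ifs <;> simp

lemma sum_sgnOf {n : ℕ} (A : Finset (Fin n)) : ∑ i, sgnOf A i = (n : ℂ) - 2 * A.card := by
  have : ∀ i, sgnOf A i = 1 - 2 * (if i ∈ A then 1 else 0) := by
    intro i; unfold sgnOf; split_ifs <;> norm_num
  simp [this, mul_comm]

lemma prod_sgnOf {n : ℕ} (A : Finset (Fin n)) :
    ((List.finRange n).map (sgnOf A)).prod = (-1)^A.card := by
  rw [← List.ofFn_eq_map, List.prod_ofFn]
  simp [sgnOf]

section resolution

variable {n : ℕ} {T : Type*} [Ring T] [Algebra ℂ T] {u : Fin n → T}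
  {F : MvPolynomial (Fin n) ℂ →ₐ[ℂ] T}

lemma mul_idemPoly (hF : ∀ i, F (MvPolynomial.X i) = u i) (hu : ∀ i, u i * u i = 1)
    (A : Finset (Fin n)) (i : Fin n) :
    u i * F (idemPoly A Finset.univ) = sgnOf A i • F (idemPoly A Finset.univ) := by
  rw [idemPoly, ← Finset.mul_prod_erase _ _ (Finset.mem_univ i), map_mul, ← mul_assoc,
    ← smul_mul_assoc]
  congr 1
  simp [hF, mul_add, hu, smul_smul]
  rw [mul_left_comm, sgnOf_mul_self, add_comm, mul_comm]
  simp

lemma idemPoly_mul (hF : ∀ i, F (MvPolynomial.X i) = u i) (hu : ∀ i, u i * u i = 1)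
    (A : Finset (Fin n)) (i : Fin n) :
    F (idemPoly A Finset.univ) * u i = sgnOf A i • F (idemPoly A Finset.univ) := by
  rw [← mul_idemPoly hF hu, ← hF, ← map_mul, ← map_mul, mul_comm]

lemma list_prod_mul_idemPoly (hF : ∀ i, F (MvPolynomial.X i) = u i) (hu : ∀ i, u i * u i = 1)
    (A : Finset (Fin n)) (l : List (Fin n)) :
    (l.map u).prod * F (idemPoly A Finset.univ) =
      (l.map (sgnOf A)).prod • F (idemPoly A Finset.univ) := by
  induction l with
  | nil => simp
  | cons a l ih =>
    simp only [List.map_cons, List.prod_cons]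
    rw [mul_assoc, ih, mul_smul_comm, mul_idemPoly hF hu, smul_smul, mul_comm]

lemma trace_eq_zero_of_anticomm (τ : T →ₗ[ℂ] ℂ) (hτ : ∀ x y, τ (x * y) = τ (y * x))
    {g x : T} (hg : IsUnit g) (h : g * x = -(x * g)) : τ x = 0 := by
  obtain ⟨g, rfl⟩ := hg
  have h1 : τ x = τ (↑g⁻¹ * (↑g * x)) := by simp
  have h2 : τ (↑g⁻¹ * (↑g * x)) = - τ x := by
    rw [h, hτ]; simp
  rw [h2] at h1
  exact self_eq_neg.mp h1

lemma trace_mul_idemPoly_eq_zero (hF : ∀ i, F (MvPolynomial.X i) = u i)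
    (hu : ∀ i, u i * u i = 1) (τ : T →ₗ[ℂ] ℂ) (hτ : ∀ x y, τ (x * y) = τ (y * x))
    (A : Finset (Fin n)) {x : T} (i : Fin n) (hx : u i * x = -(x * u i)) :
    τ (x * F (idemPoly A Finset.univ)) = 0 := by
  refine trace_eq_zero_of_anticomm τ hτ (g := u i) ⟨⟨_, _, hu i, hu i⟩, rfl⟩ ?_
  rw [← mul_assoc, hx, neg_mul, mul_assoc, mul_assoc, mul_idemPoly hF hu, idemPoly_mul hF hu]

lemma trace_idemPoly (hF : ∀ i, F (MvPolynomial.X i) = u i) (τ : T →ₗ[ℂ] ℂ)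
    (hτ : ∀ x y, τ (x * y) = τ (y * x)) (g : Fin n → T) (hg : ∀ i, IsUnit (g i))
    (hgi : ∀ i, g i * u i = -(u i * g i)) (hgj : ∀ i j, i ≠ j → Commute (g i) (u j))
    (A S : Finset (Fin n)) : τ (F (idemPoly A S)) = ((2:ℂ)⁻¹)^S.card * τ 1 := by
  induction S using Finset.induction_on with
  | empty => simp [idemPoly]
  | insert a S ha ih =>
    have hc : Commute (g a) (F (idemPoly A S)) := by
      have : idemPoly A S ∈ (Subalgebra.centralizer ℂ {g a}).comap F := by
        refine Subalgebra.prod_mem _ fun i hi => Subalgebra.smul_mem _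
          (add_mem (one_mem _) (Subalgebra.smul_mem _ ?_ _)) _
        rw [Subalgebra.mem_comap, hF, Subalgebra.mem_centralizer_iff]
        rintro _ rfl
        exact hgj a i (ne_of_mem_of_not_mem hi ha).symm
      exact (Subalgebra.mem_centralizer_iff ℂ).mp this _ rfl
    have h0 : τ (u a * F (idemPoly A S)) = 0 := by
      refine trace_eq_zero_of_anticomm τ hτ (hg a) ?_
      rw [← mul_assoc, hgi, neg_mul, mul_assoc, mul_assoc, hc.eq]
    rw [Finset.card_insert_of_notMem ha, pow_succ, mul_right_comm, ← ih, idemPoly,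
      Finset.prod_insert ha, ← idemPoly]
    rw [map_mul, map_smul, map_add, map_smul, hF, smul_mul_assoc, add_mul, smul_mul_assoc,
      map_smul, map_add, map_smul, h0]
    simp [mul_comm]

end resolution

lemma cEv_symm (r k : ℕ) (hk : k ≤ 2*r) : cEv r (2*r-k) = cEv r k := by
  unfold cEv
  push_cast [hk]
  ring

lemma cEv_inj (r : ℕ) (hr : 2 ≤ r) {j k : ℕ} (hj : j ≤ r) (hk : k ≤ r)
    (h : cEv r j = cEv r k) : j = k := by
  have h1 : (16*((r:ℂ)-1)) ≠ 0 := by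
    have : (r:ℂ) ≠ 1 := by norm_cast; omega
    simpa [sub_eq_zero] using this
  unfold cEv at h
  rw [div_left_inj' h1] at h
  have h2 : ((j:ℂ) - k) * (2*r - j - k) = 0 := by linear_combination h / 2
  rcases mul_eq_zero.mp h2 with h3 | h3
  · exact_mod_cast sub_eq_zero.mp h3
  · have : 2 * (r:ℂ) = j + k := by linear_combination h3
    norm_cast at this
    omega

lemma sC_mul {r : ℕ} {F : MvPolynomial (Fin (2*r)) ℂ →ₐ[ℂ] Cl r ⊗[ℂ] Cl r}
    (hF : ∀ i, F (MvPolynomial.X i) = uGen r i) (hr : 2 ≤ r) (A : Finset (Fin (2*r))) :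
    sC r * F (idemPoly A Finset.univ) = cEv r A.card • F (idemPoly A Finset.univ) := by
  have h1 : (r:ℂ) - 1 ≠ 0 := by
    rw [sub_ne_zero]
    norm_cast
    omega
  have hS : (∑ i, uGen r i) * F (idemPoly A Finset.univ) =
      (2 * (r:ℂ) - 2 * A.card) • F (idemPoly A Finset.univ) := by
    rw [Finset.sum_mul, Finset.sum_congr rfl fun i _ => mul_idemPoly hF (uGen_mul_self r) A i,
      ← Finset.sum_smul, sum_sgnOf]
    push_cast
    rfl
  rw [sC, Ik_two, smul_mul_assoc, sub_mul, mul_assoc, hS, mul_smul_comm, hS, smul_mul_assoc,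
    one_mul, smul_smul, ← sub_smul, smul_smul]
  congr 1
  rw [cEv, show 16 * (2 * (r:ℂ) - 2) = 2 * (16 * ((r:ℂ) - 1)) by ring]
  field_simp
  ring

lemma list_prod_smul_sub_mul {T : Type*} [Ring T] [Algebra ℂ T] {x e : T} {c : ℂ}
    (h : x * e = c • e) (a b : ℕ → ℂ) (l : List ℕ) :
    (l.map fun j => a j • (x - b j • 1)).prod * e =
      (l.map fun j => a j * (c - b j)).prod • e := by
  induction l with
  | nil => simp
  | cons j l ih =>
    simp only [List.map_cons, List.prod_cons]
    rw [mul_assoc, ih, mul_smul_comm, smul_mul_assoc, sub_mul, h, smul_mul_assoc, one_mul,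
      ← sub_smul, smul_smul, smul_smul]
    congr 1
    ring

lemma Pk_mul {r : ℕ} {F : MvPolynomial (Fin (2*r)) ℂ →ₐ[ℂ] Cl r ⊗[ℂ] Cl r}
    (hF : ∀ i, F (MvPolynomial.X i) = uGen r i) (hr : 2 ≤ r) {k : ℕ} (hk : k ≤ r)
    (A : Finset (Fin (2*r))) :
    Pk r k * F (idemPoly A Finset.univ) =
      (if A.card = k ∨ A.card = 2*r-k then (1:ℂ) else 0) • F (idemPoly A Finset.univ) := by
  have hA : A.card ≤ 2*r := by simpa using A.card_le_univ
  rw [Pk, list_prod_smul_sub_mul (sC_mul hF hr A)]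
  congr 1
  split_ifs with h
  · have hc : cEv r A.card = cEv r k := by
      rcases h with h | h
      · rw [h]
      · rw [h, cEv_symm r k (by omega)]
    refine List.prod_eq_one fun x hx => ?_
    simp only [List.mem_map, List.mem_filter, List.mem_range, decide_eq_true_eq] at hx
    obtain ⟨j, ⟨hj, hjk⟩, rfl⟩ := hx
    rw [hc, inv_mul_cancel₀]
    exact sub_ne_zero.mpr fun h => hjk (cEv_inj r hr (by omega) hk h.symm)
  · push Not at h
    obtain ⟨j, hj, hjk, hc⟩ : ∃ j ≤ r, j ≠ k ∧ cEv r A.card = cEv r j := by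
      rcases le_total A.card r with hle | hle
      · exact ⟨A.card, hle, h.1, rfl⟩
      · exact ⟨2*r - A.card, by omega, by omega, (cEv_symm r _ hA).symm⟩
    refine List.prod_eq_zero (List.mem_map.mpr ⟨j, ?_, ?_⟩)
    · simp only [List.mem_filter, List.mem_range, decide_eq_true_eq]
      exact ⟨by omega, hjk⟩
    · rw [hc, sub_self, mul_zero]

lemma ppCh_eq (r : ℕ) (ε ε' : ℂ) :
    ppCh r ε ε' = (4:ℂ)⁻¹ • (1 + ε • (Γtop r ⊗ₜ[ℂ] 1) + ε' • ((1 : Cl r) ⊗ₜ[ℂ] Γtop r) +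
      (ε * ε') • (Γtop r ⊗ₜ[ℂ] Γtop r)) := by
  rw [ppCh, pCh, pCh, TensorProduct.smul_tmul_smul, TensorProduct.add_tmul,
    TensorProduct.tmul_add, TensorProduct.tmul_add, TensorProduct.smul_tmul_smul,
    TensorProduct.tmul_smul, ← TensorProduct.smul_tmul', Algebra.TensorProduct.one_def]
  congr 1
  · norm_num
  · abel

section trace

variable {r : ℕ} {F : MvPolynomial (Fin (2*r)) ℂ →ₐ[ℂ] Cl r ⊗[ℂ] Cl r}
  {τ : Cl r ⊗[ℂ] Cl r →ₗ[ℂ] ℂ}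

lemma trace_idemPoly_univ (hF : ∀ i, F (MvPolynomial.X i) = uGen r i)
    (hτ : ∀ x y, τ (x * y) = τ (y * x)) (h1 : τ 1 = 2^(2*r)) (A : Finset (Fin (2*r))) :
    τ (F (idemPoly A Finset.univ)) = 1 := by
  rw [trace_idemPoly hF τ hτ (fun i => (Γtop r * Γgen r i) ⊗ₜ[ℂ] 1), h1, Finset.card_univ,
    Fintype.card_fin, ← mul_pow]
  · norm_num
  · intro i
    exact ((isUnit_Γtop r).mul (isUnit_Γgen r i)).map
      (Algebra.TensorProduct.includeLeft : Cl r →ₐ[ℂ] Cl r ⊗[ℂ] Cl r)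
  · intro i
    simp only [uGen, Algebra.TensorProduct.tmul_mul_tmul, one_mul, mul_one,
      ← TensorProduct.neg_tmul]
    rw [← mul_assoc (Γgen r i), Γgen_mul_Γtop, neg_mul, neg_neg]
  · intro i j h
    simp only [Commute, SemiconjBy, uGen, Algebra.TensorProduct.tmul_mul_tmul, one_mul, mul_one]
    rw [← mul_assoc (Γgen r j), Γgen_mul_Γtop, mul_assoc, Γgen_anticomm r h, neg_mul, mul_assoc,
      mul_neg]

lemma trace_ppCh_mul_idemPoly (hr : 2 ≤ r) (hF : ∀ i, F (MvPolynomial.X i) = uGen r i)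
    (hτ : ∀ x y, τ (x * y) = τ (y * x)) (h1 : τ 1 = 2^(2*r)) (ε ε' : ℂ)
    (A : Finset (Fin (2*r))) :
    τ (ppCh r ε ε' * F (idemPoly A Finset.univ)) = 4⁻¹ * (1 + ε * ε' * (-1)^(r + A.card)) := by
  have hl : τ ((Γtop r ⊗ₜ[ℂ] 1) * F (idemPoly A Finset.univ)) = 0 := by
    refine trace_mul_idemPoly_eq_zero hF (uGen_mul_self r) τ hτ A ⟨0, by omega⟩ ?_
    simp [uGen, Γgen_mul_Γtop, TensorProduct.neg_tmul]
  have hr : τ (((1 : Cl r) ⊗ₜ[ℂ] Γtop r) * F (idemPoly A Finset.univ)) = 0 := by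
    refine trace_mul_idemPoly_eq_zero hF (uGen_mul_self r) τ hτ A ⟨0, by omega⟩ ?_
    simp [uGen, Γgen_mul_Γtop, TensorProduct.tmul_neg]
  have hlr : τ ((Γtop r ⊗ₜ[ℂ] Γtop r) * F (idemPoly A Finset.univ)) = (-1)^(r + A.card) := by
    rw [Γtop_tmul_Γtop, smul_mul_assoc, list_prod_mul_idemPoly hF (uGen_mul_self r), prod_sgnOf,
      map_smul, map_smul, trace_idemPoly_univ hF hτ h1, pow_add]
    simp
  rw [ppCh_eq]
  simp only [smul_mul_assoc, add_mul, one_mul, map_smul, map_add, hl, hr, hlr,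
    trace_idemPoly_univ hF hτ h1, smul_eq_mul]
  ring

end trace

lemma trace_ppCh_mul_Pk {r : ℕ} (hr : 2 ≤ r) {τ : Cl r ⊗[ℂ] Cl r →ₗ[ℂ] ℂ}
    (hτ : ∀ x y, τ (x * y) = τ (y * x)) (h1 : τ 1 = 2^(2*r)) (ε ε' : ℂ) {k : ℕ} (hk : k ≤ r) :
    τ (ppCh r ε ε' * Pk r k) = ∑ m ∈ Finset.range (2*r+1),
      if m = k ∨ m = 2*r-k then
        ((2*r).choose m : ℂ) * (4⁻¹ * (1 + ε * ε' * (-1)^(r + m))) else 0 := by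
  obtain ⟨F, hF⟩ := exists_aeval_of_comm (uGen r) (uGen_comm r)
  have hA (A : Finset (Fin (2*r))) :
      τ (ppCh r ε ε' * Pk r k * F (idemPoly A Finset.univ)) =
        if A.card = k ∨ A.card = 2*r-k then 4⁻¹ * (1 + ε * ε' * (-1)^(r + A.card)) else 0 := by
    rw [mul_assoc, Pk_mul hF hr hk, mul_smul_comm, map_smul,
      trace_ppCh_mul_idemPoly hr hF hτ h1]
    simp
  rw [← mul_one (ppCh r ε ε' * Pk r k), ← map_one F, ← sum_idemPoly, map_sum, Finset.mul_sum,
    map_sum, Finset.sum_congr rfl fun A _ => hA A, ← Finset.powerset_univ,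
    Finset.sum_powerset_apply_card
      (fun m => if m = k ∨ m = 2*r-k then 4⁻¹ * (1 + ε * ε' * (-1)^(r + m)) else 0)]
  simp

lemma trace_ppCh_mul_Pk_of_lt {r : ℕ} (hr : 2 ≤ r) {τ : Cl r ⊗[ℂ] Cl r →ₗ[ℂ] ℂ}
    (hτ : ∀ x y, τ (x * y) = τ (y * x)) (h1 : τ 1 = 2^(2*r)) (ε ε' : ℂ) {k : ℕ} (hk : k < r) :
    τ (ppCh r ε ε' * Pk r k) =
      ((2*r).choose k : ℂ) * (2⁻¹ * (1 + ε * ε' * (-1)^(r + k))) := by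
  have hsplit (m : ℕ) (z : ℂ) : (if m = k ∨ m = 2*r-k then z else 0) =
      (if m = k then z else 0) + (if m = 2*r-k then z else 0) := by
    split_ifs <;> first | omega | simp
  have hsgn : (-1 : ℂ)^(r + (2*r-k)) = (-1)^(r + k) := by
    rw [show r + (2*r-k) = r + k + 2*(r-k) by omega, pow_add, (even_two_mul (r-k)).neg_one_pow,
      mul_one]
  rw [trace_ppCh_mul_Pk hr hτ h1 ε ε' hk.le]
  simp only [hsplit, Finset.sum_add_distrib, Finset.sum_ite_eq', Finset.mem_range]
  rw [if_pos (by omega), if_pos (by omega), Nat.choose_symm (by omega), hsgn]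
  ring

lemma trace_ppCh_mul_Pk_self {r : ℕ} (hr : 2 ≤ r) {τ : Cl r ⊗[ℂ] Cl r →ₗ[ℂ] ℂ}
    (hτ : ∀ x y, τ (x * y) = τ (y * x)) (h1 : τ 1 = 2^(2*r)) (ε ε' : ℂ) :
    τ (ppCh r ε ε' * Pk r r) = ((2*r).choose r : ℂ) * (4⁻¹ * (1 + ε * ε')) := by
  rw [trace_ppCh_mul_Pk hr hτ h1 ε ε' le_rfl, show 2*r-r = r by omega]
  simp only [or_self, Finset.sum_ite_eq', Finset.mem_range]
  rw [if_pos (by omega), (Even.add_self r).neg_one_pow, mul_one]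

/-- traces of the chiral spectral projectors for odd `r ≥ 3`. -/
theorem proj_traces_odd_r (r : ℕ) (hr : 3 ≤ r) (hro : Odd r)
    (φ : Cl r ≃ₐ[ℂ] Matrix (Fin (2^r)) (Fin (2^r)) ℂ)
    (Φ : Cl r ⊗[ℂ] Cl r →ₐ[ℂ] Matrix (Fin (2^r) × Fin (2^r)) (Fin (2^r) × Fin (2^r)) ℂ)
    (hΦ : ∀ a b : Cl r, Φ (a ⊗ₜ[ℂ] b) = Matrix.kroneckerMap (· * ·) (φ a) (φ b))
    (ε : ℂ) (hε : ε = 1 ∨ ε = -1) :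
    (∀ m : ℕ, m ≤ (r-1)/2 →
      Matrix.trace (Φ (ppCh r ε (-ε) * Pk r (2*m)))
        = ((2*r).factorial : ℂ) / (((2*m).factorial : ℂ) * ((2*r-2*m).factorial : ℂ))) ∧
    (∀ m : ℕ, 1 ≤ m → m ≤ (r-1)/2 →
      Matrix.trace (Φ (ppCh r ε ε * Pk r (2*m-1)))
        = ((2*r).factorial : ℂ) / (((2*m-1).factorial : ℂ) * ((2*r-2*m+1).factorial : ℂ))) ∧
    Matrix.trace (Φ (ppCh r ε ε * Pk r r))
        = ((2*r).factorial : ℂ) / (2 * ((r.factorial : ℂ))^2) := by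
  let τ : Cl r ⊗[ℂ] Cl r →ₗ[ℂ] ℂ :=
    (Matrix.traceLinearMap (Fin (2^r) × Fin (2^r)) ℂ ℂ).comp Φ.toLinearMap
  have hτ (x y : Cl r ⊗[ℂ] Cl r) : τ (x * y) = τ (y * x) := by
    simp only [τ, LinearMap.comp_apply, AlgHom.toLinearMap_apply, map_mul,
      Matrix.traceLinearMap_apply]
    exact Matrix.trace_mul_comm _ _
  have h1 : τ 1 = 2^(2*r) := by
    simp [τ, Matrix.trace_one, two_mul, pow_add]
  have hε2 : ε * ε = 1 := by rcases hε with rfl | rfl <;> norm_num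
  refine ⟨fun m hm => ?_, fun m hm hm' => ?_, ?_⟩
  · have hodd : Odd (r + 2*m) := hro.add_even (even_two_mul m)
    refine (trace_ppCh_mul_Pk_of_lt (by omega) hτ h1 ε (-ε) (k := 2*m) (by omega)).trans ?_
    rw [hodd.neg_one_pow, show ε * -ε * -1 = 1 by linear_combination hε2, Nat.cast_choose ℂ (by omega)]
    norm_num
  · have heven : Even (r + (2*m-1)) := hro.add_odd ⟨m - 1, by omega⟩
    refine (trace_ppCh_mul_Pk_of_lt (by omega) hτ h1 ε ε (k := 2*m-1) (by omega)).trans ?_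
    rw [heven.neg_one_pow, hε2, Nat.cast_choose ℂ (by omega),
      show 2*r - (2*m-1) = 2*r-2*m+1 by omega]
    norm_num
  · refine (trace_ppCh_mul_Pk_self (by omega) hτ h1 ε ε).trans ?_
    rw [hε2, Nat.cast_choose ℂ (by omega), show 2*r-r = r by omega]
    ring

end
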